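/- Correctness of the exact bribery reduction (brave version): in the bribery construction with m < n, the following are equivalent: (i) there exists α : X → Bool such that ψ[α∪β] is true for every β : Y → Bool; (ii) there exists a profile J⃗' obtained from J⃗ = (J₁, J₂, J₃) by replacing at most one of its ballots by a rational ballot, such that some r* ∈ Kemeny(J⃗') sets the issue b_1 to true. -/

import Mathlib

/-!
The cumulative distance of a ballot to a profile is a sum of independent costs, one per issue
(`dist3_eq`, `sum_issue`). Outside the `u`-issues, two of the three ballots of a bribed profile are
all-false, so setting such an issue to true costs between 1 and 3 more than setting it to false.

From (ii) to (i): suppose every `α` has some `β` falsifying `ψ`, and let `r` be a Kemeny outcome with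
`b₁` true. If some block of `u`-issues is all true in `r`, switching `b₁` off preserves rationality
and is cheaper. Otherwise `r` satisfies Γ₀, and `b₁` forces `A`, `T` and `C`. Keep the `x`- and
`u`-issues of `r`, switch off all `t`- and `b`-issues (saving at least `m + (2m+4)`), and switch on
`a` and one of each pair `y_j, y'_j` according to a falsifying `β` (costing at most `3m + 3`). The
result is rational and strictly cheaper, a contradiction. This is `no_b_of_refuted`.

From (i) to (ii): replace `J₁` by the ballot `bribe α`, which encodes `α` and sets the `t`- and
`b`-issues to true. It is itself a Kemeny outcome: a ballot with `Z` is no cheaper because `m < n`;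
one with `A` and `B` must encode an assignment other than `α`, which costs 2 more on the `x`-issues
and makes it dearer by 1; and an all-true block of `u`-issues is too expensive. This is
`bribe_optimal`.
-/

/-!
Constraint-based judgment aggregation: the bribery construction.
Issues are modelled as an inductive type, ballots as functions `Issue n m → Bool`,
the integrity constraint as a predicate on ballots, and the formula ψ as a Boolean
function of the assignments to X and Y.
-/

namespace Brib

/-- The issues of the bribery construction. -/
inductive Issue (n m : ℕ) : Type
  | x : Fin n → Issue n m
  | x' : Fin n → Issue n m
  | z : Fin n → Issue n m
  | y : Fin m → Issue n m
  | y' : Fin m → Issue n m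
  | t : Fin m → Issue n m
  | u : Fin 3 → Fin (10 * n + 10 * m + 10) → Issue n m
  | a : Issue n m
  | b : Fin (2 * m + 4) → Issue n m
  deriving DecidableEq, Fintype

variable {n m : ℕ}

/-- Hamming distance between two ballots: the number of issues on which they differ. -/
def hamming {I : Type*} [Fintype I] (r r' : I → Bool) : ℕ :=
  (Finset.univ.filter (fun i => r i ≠ r' i)).card

/-- Weighted Hamming distance: the sum of the weights of the issues on which the
two ballots differ. -/
def whamming {I : Type*} [Fintype I] (w : I → ℕ) (r r' : I → Bool) : ℕ :=
  ∑ i ∈ Finset.univ.filter (fun i => r i ≠ r' i), w i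

def bigA (r : Issue n m → Bool) : Prop := ∀ i, r (.x i) ≠ r (.x' i)
def bigZ (r : Issue n m → Bool) : Prop := ∀ i, r (.z i) = true
def bigB (r : Issue n m → Bool) : Prop := ∀ j, r (.y j) ≠ r (.y' j)
def bigT (r : Issue n m → Bool) : Prop := ∀ j, r (.t j) = true
def bigC (r : Issue n m → Bool) : Prop := ∀ j, r (.b j) = true

/-- The part Γ₀ of the integrity constraint. -/
def gamma0 (psi : (Fin n → Bool) → (Fin m → Bool) → Bool) (r : Issue n m → Bool) : Prop :=
  (r .a = true ∨ bigC r) ∧ (r .a = true → ∀ j, r (.b j) = false) ∧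
  (bigC r → r .a = false) ∧
  (bigA r ∨ bigZ r) ∧ (bigA r → ∀ i, r (.z i) = false) ∧
  Xor' (bigB r) (bigT r) ∧ (bigB r → ∀ j, r (.t j) = false) ∧
  (bigZ r → ∀ i, r (.x i) = false ∧ r (.x' i) = false) ∧
  (bigT r → ∀ j, r (.y j) = false ∧ r (.y' j) = false) ∧
  (bigZ r → (r .a = true ∧ bigT r)) ∧
  ((bigA r ∧ bigB r) →
    (psi (fun i => r (.x i)) (fun j => r (.y j)) = false ∧ r .a = true)) ∧
  ((bigA r ∧ bigT r) → bigC r)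

/-- A ballot is rational if it satisfies the integrity constraint
`Γ = Γ₀ ∨ ⋁_{i∈[3]} ⋀_{ℓ∈[u]} u_{i,ℓ}`. -/
def rational (psi : (Fin n → Bool) → (Fin m → Bool) → Bool) (r : Issue n m → Bool) : Prop :=
  gamma0 psi r ∨ ∃ i : Fin 3, ∀ ℓ, r (.u i ℓ) = true

/-- The profile J⃗ = (J₁, J₂, J₃): the ballot J_{k+1} sets exactly the issues
u_{k+1,ℓ} to true. -/
def Jp (k : Fin 3) : Issue n m → Bool := fun i => match i with
  | .u k' _ => k' == k
  | _ => false

/-- The briber's desired ballot J₀: true exactly on the b- and u₁-issues. -/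
def Jzero : Issue n m → Bool := fun i => match i with
  | .b _ => true
  | .u k _ => k == 0
  | _ => false

/-- The briber's weight function: weight 1 on each b-issue, weight 0 elsewhere. -/
def wt : Issue n m → ℕ := fun i => match i with
  | .b _ => 1
  | _ => 0

/-- Cumulative Hamming distance of a ballot to a profile of three ballots. -/
def dist3 (r p1 p2 p3 : Issue n m → Bool) : ℕ :=
  hamming r p1 + hamming r p2 + hamming r p3

/-- Membership in the set of Kemeny outcomes of the profile (p1, p2, p3):
a rational ballot minimizing the cumulative Hamming distance among rational ballots. -/
def kemenyMem (psi : (Fin n → Bool) → (Fin m → Bool) → Bool)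
    (p1 p2 p3 r : Issue n m → Bool) : Prop :=
  rational psi r ∧ ∀ r', rational psi r' → dist3 r p1 p2 p3 ≤ dist3 r' p1 p2 p3

end Brib

namespace Brib

variable {n m : ℕ}

/-- The issues as a disjoint union of their nine families. -/
def issueEquiv : Issue n m ≃
    Fin n ⊕ Fin n ⊕ Fin n ⊕ Fin m ⊕ Fin m ⊕ Fin m ⊕
      (Fin 3 × Fin (10 * n + 10 * m + 10)) ⊕ Unit ⊕ Fin (2 * m + 4) where
  toFun
    | .x i => .inl i
    | .x' i => .inr (.inl i)
    | .z i => .inr (.inr (.inl i))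
    | .y i => .inr (.inr (.inr (.inl i)))
    | .y' i => .inr (.inr (.inr (.inr (.inl i))))
    | .t i => .inr (.inr (.inr (.inr (.inr (.inl i)))))
    | .u k l => .inr (.inr (.inr (.inr (.inr (.inr (.inl (k, l)))))))
    | .a => .inr (.inr (.inr (.inr (.inr (.inr (.inr (.inl ())))))))
    | .b j => .inr (.inr (.inr (.inr (.inr (.inr (.inr (.inr j)))))))
  invFun
    | .inl i => .x i
    | .inr (.inl i) => .x' i
    | .inr (.inr (.inl i)) => .z i
    | .inr (.inr (.inr (.inl i))) => .y i
    | .inr (.inr (.inr (.inr (.inl i)))) => .y' i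
    | .inr (.inr (.inr (.inr (.inr (.inl i))))) => .t i
    | .inr (.inr (.inr (.inr (.inr (.inr (.inl p)))))) => .u p.1 p.2
    | .inr (.inr (.inr (.inr (.inr (.inr (.inr (.inl _))))))) => .a
    | .inr (.inr (.inr (.inr (.inr (.inr (.inr (.inr j))))))) => .b j
  left_inv := by intro i; cases i <;> rfl
  right_inv := by
    rintro (i | i | i | i | i | i | ⟨k, l⟩ | _ | j) <;> rfl

/-- Summation over all issues, family by family; the paired issues `x_i, x'_i` and `y_j, y'_j` are
summed together. -/
lemma sum_issue (f : Issue n m → ℕ) :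
    ∑ i, f i = (∑ i, (f (.x i) + f (.x' i))) + (∑ i, f (.z i)) +
      (∑ j, (f (.y j) + f (.y' j))) + (∑ j, f (.t j)) +
      (∑ l, f (.u 0 l) + ∑ l, f (.u 1 l) + ∑ l, f (.u 2 l)) + f .a + ∑ j, f (.b j) := by
  rw [← Equiv.sum_comp (issueEquiv (n := n) (m := m)).symm f]
  simp only [Fintype.sum_sum_type, Fintype.sum_prod_type, Fin.sum_univ_three,
    Finset.sum_add_distrib, Finset.univ_unique, Finset.sum_singleton, issueEquiv,
    Equiv.coe_fn_symm_mk]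
  ring

/-- The contribution of the issue `i` to the cumulative distance when its value is `v`. -/
def cost (p1 p2 p3 : Issue n m → Bool) (i : Issue n m) (v : Bool) : ℕ :=
  (if v ≠ p1 i then 1 else 0) + (if v ≠ p2 i then 1 else 0) + (if v ≠ p3 i then 1 else 0)

lemma dist3_eq (r p1 p2 p3 : Issue n m → Bool) :
    dist3 r p1 p2 p3 = ∑ i, cost p1 p2 p3 i (r i) := by
  simp only [dist3, hamming, cost, Finset.card_filter, Finset.sum_add_distrib]

lemma cost_le (p1 p2 p3 : Issue n m → Bool) (i : Issue n m) (v w : Bool) :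
    cost p1 p2 p3 i v ≤ cost p1 p2 p3 i w + 3 := by
  unfold cost; split_ifs <;> omega

lemma Jp_eq_false (k : Fin 3) {i : Issue n m} (hi : ∀ k l, i ≠ .u k l) : Jp k i = false := by
  cases i <;> first | rfl | exact absurd rfl (hi _ _)

lemma sum_ge {N : ℕ} (f : Fin N → ℕ) (c : ℕ) (h : ∀ i, c ≤ f i) : N * c ≤ ∑ i, f i := by
  simpa using Finset.card_nsmul_le_sum Finset.univ f c (fun i _ => h i)

/-- If turning on any issue outside the `u`-issues has a positive price, and every `α` has a
falsifying `β`, then no Kemeny outcome sets a `b`-issue to true. -/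
lemma no_b_of_refuted (psi : (Fin n → Bool) → (Fin m → Bool) → Bool)
    (hpsi : ∀ α, ∃ β, psi α β = false) (hn : 0 < n) (hm : 0 < m) (p1 p2 p3 : Issue n m → Bool)
    (hp : ∀ i : Issue n m, (∀ k l, i ≠ .u k l) →
      cost p1 p2 p3 i false + 1 ≤ cost p1 p2 p3 i true)
    (r : Issue n m → Bool) (hr : kemenyMem psi p1 p2 p3 r) (j0 : Fin (2 * m + 4))
    (hb : r (.b j0) = true) : False := by
  obtain ⟨hrat, hmin⟩ := hr
  rcases hrat with hg | ⟨k, hk⟩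
  · obtain ⟨h1, h2, -, h4, h5, h6, -, -, h9, h10, h11, -⟩ := hg
    have ha : r .a = false := by
      by_contra h
      have := h2 (by simpa using h) j0
      simp [hb] at this
    have hC : bigC r := h1.resolve_left (by simp [ha])
    have hA : bigA r := h4.resolve_right (fun h => by simpa [ha] using (h10 h).1)
    have hB : ¬ bigB r := fun h => by simpa [ha] using (h11 ⟨hA, h⟩).2
    have hT : bigT r := by
      rcases h6 with h | h
      · exact absurd h.1 hB
      · exact h.1
    have hz := h5 hA
    have hy := h9 hT
    obtain ⟨β, hβ⟩ := hpsi (fun i => r (.x i))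
    let r' : Issue n m → Bool := fun i => match i with
      | .x i => r (.x i)
      | .x' i => r (.x' i)
      | .z _ => false
      | .y j => β j
      | .y' j => !β j
      | .t _ => false
      | .u k l => r (.u k l)
      | .a => true
      | .b _ => false
    have hr' : rational psi r' := by
      left
      have hA' : bigA r' := hA
      have hB' : bigB r' := fun j => by simp [r']
      have hT' : ¬ bigT r' := fun h => by simpa [r'] using h ⟨0, hm⟩
      have hZ' : ¬ bigZ r' := fun h => by simpa [r'] using h ⟨0, hn⟩
      have hC' : ¬ bigC r' := fun h => by simpa [r'] using h ⟨0, by omega⟩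
      refine ⟨Or.inl rfl, fun _ _ => rfl, fun h => absurd h hC', Or.inl hA', fun _ _ => rfl,
        Or.inl ⟨hB', hT'⟩, fun _ _ => rfl, fun h => absurd h hZ', fun h => absurd h hT',
        fun h => absurd h hZ', fun _ => ⟨hβ, rfl⟩, fun h => absurd h.2 hT'⟩
    have hle := hmin r' hr'
    rw [dist3_eq, dist3_eq, sum_issue, sum_issue] at hle
    simp only [r', ha, hz, (hy _).1, (hy _).2, hT _, hC _] at hle
    have eY : ∑ j, (cost p1 p2 p3 (.y j) (β j) + cost p1 p2 p3 (.y' j) (!β j)) ≤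
        ∑ j, (cost p1 p2 p3 (.y j) false + cost p1 p2 p3 (.y' j) false) + m * 3 := by
      have : ∑ j : Fin m, (cost p1 p2 p3 (.y j) false + cost p1 p2 p3 (.y' j) false) + m * 3 =
          ∑ j : Fin m, (cost p1 p2 p3 (.y j) false + cost p1 p2 p3 (.y' j) false + 3) := by
        simp [Finset.sum_add_distrib]
      rw [this]
      refine Finset.sum_le_sum fun j _ => ?_
      have e1 := cost_le p1 p2 p3 (.y j) true false
      have e2 := cost_le p1 p2 p3 (.y' j) true false
      cases β j <;> simp only [Bool.not_false, Bool.not_true] <;> omega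
    have eT : ∑ j, cost p1 p2 p3 (.t j) false + m ≤ ∑ j, cost p1 p2 p3 (.t j) true := by
      have := Finset.sum_le_sum (s := Finset.univ)
        fun (j : Fin m) _ => hp (.t j) (by simp)
      simpa [Finset.sum_add_distrib] using this
    have eC : ∑ j, cost p1 p2 p3 (.b j) false + (2 * m + 4) ≤ ∑ j, cost p1 p2 p3 (.b j) true := by
      have := Finset.sum_le_sum (s := Finset.univ)
        fun (j : Fin (2 * m + 4)) _ => hp (.b j) (by simp)
      simpa [Finset.sum_add_distrib] using this
    have eA := cost_le p1 p2 p3 .a true false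
    omega
  · have hr' : rational psi (Function.update r (.b j0) false) :=
      Or.inr ⟨k, fun l => by simp [hk]⟩
    have hle := hmin _ hr'
    rw [dist3_eq, dist3_eq] at hle
    refine absurd hle (not_le.mpr (Finset.sum_lt_sum (fun i _ => ?_) ⟨.b j0, by simp, ?_⟩))
    · by_cases h : i = .b j0
      · subst h
        have := hp (.b j0) (by simp)
        simp only [Function.update_self, hb]
        omega
      · simp [Function.update_of_ne h]
    · have := hp (.b j0) (by simp)
      simp only [Function.update_self, hb]
      omega

/-- The briber's ballot: it encodes `α` on the `x`-issues, and sets all `t`- and `b`-issues to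
true. -/
def bribe (α : Fin n → Bool) : Issue n m → Bool := fun i => match i with
  | .x i => α i
  | .x' i => !α i
  | .t _ => true
  | .b _ => true
  | _ => false

lemma bribe_rational (psi : (Fin n → Bool) → (Fin m → Bool) → Bool) (hn : 0 < n) (hm : 0 < m)
    (α : Fin n → Bool) : rational psi (bribe α) := by
  left
  have hA : bigA (bribe (m := m) α) := fun i => by simp [bribe]
  have hT : bigT (bribe (m := m) α) := fun _ => rfl
  have hC : bigC (bribe (m := m) α) := fun _ => rfl
  have hZ : ¬ bigZ (bribe (m := m) α) := fun h => by simpa [bribe] using h ⟨0, hn⟩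
  have hB : ¬ bigB (bribe (m := m) α) := fun h => by simpa [bribe] using h ⟨0, hm⟩
  exact ⟨Or.inr hC, fun h => by simp [bribe] at h, fun _ => rfl, Or.inl hA, fun _ _ => rfl,
    Or.inr ⟨hT, hB⟩, fun h => absurd h hB, fun h => absurd h hZ, fun _ _ => ⟨rfl, rfl⟩,
    fun h => absurd h hZ, fun h => absurd h.2 hB, fun _ => hC⟩

lemma bribe_optimal (psi : (Fin n → Bool) → (Fin m → Bool) → Bool) (hmn : m < n)
    (α : Fin n → Bool) (hα : ∀ β, psi α β = true) (r : Issue n m → Bool) (hr : rational psi r) :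
    dist3 (bribe (m := m) α) (bribe α) (Jp 1) (Jp 2) ≤ dist3 r (bribe α) (Jp 1) (Jp 2) := by
  have hK : dist3 (bribe (m := m) α) (bribe α) (Jp 1) (Jp 2) =
      2 * n + 2 * m + 2 * (2 * m + 4) + 2 * (10 * n + 10 * m + 10) := by
    rw [dist3_eq, sum_issue]
    have hx : ∀ i, (cost (bribe α) (Jp 1) (Jp 2) (.x i : Issue n m) (α i) +
        cost (bribe α) (Jp 1) (Jp 2) (.x' i : Issue n m) (!α i)) = 2 := by
      intro i; cases h : α i <;> simp [cost, bribe, Jp, h]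
    simp only [bribe] at hx ⊢
    simp only [hx]
    simp [cost, Jp, bribe]
    omega
  rw [hK, dist3_eq, sum_issue]
  set c := cost (bribe α) (Jp 1) (Jp 2) with hc
  have xge : n * 1 ≤ ∑ i, (c (.x i) (r (.x i)) + c (.x' i) (r (.x' i))) :=
    sum_ge _ _ fun i => by
      cases h : α i <;> cases r (.x i) <;> cases r (.x' i) <;> simp [hc, cost, bribe, Jp, h]
  have tge : m * 1 ≤ ∑ j, c (.t j) (r (.t j)) :=
    sum_ge _ _ fun j => by cases r (.t j) <;> simp [hc, cost, bribe, Jp]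
  have bge : (2 * m + 4) * 1 ≤ ∑ j, c (.b j) (r (.b j)) :=
    sum_ge _ _ fun j => by cases r (.b j) <;> simp [hc, cost, bribe, Jp]
  have u1 : (10 * n + 10 * m + 10) * 1 ≤ ∑ l, c (.u 1 l) (r (.u 1 l)) :=
    sum_ge _ _ fun l => by cases r (.u 1 l) <;> simp [hc, cost, bribe, Jp]
  have u2 : (10 * n + 10 * m + 10) * 1 ≤ ∑ l, c (.u 2 l) (r (.u 2 l)) :=
    sum_ge _ _ fun l => by cases r (.u 2 l) <;> simp [hc, cost, bribe, Jp]
  rcases hr with hg | ⟨k, hk⟩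
  · obtain ⟨h1, h2, -, h4, -, h6, -, -, -, h10, h11, h12⟩ := hg
    by_cases hZ : bigZ r
    · -- with `Z`, each `z_i` costs 3, which outweighs the saving on the `x`- and `b`-issues since `m < n`
      obtain ⟨ha, hT⟩ := h10 hZ
      have zge : n * 3 ≤ ∑ i, c (.z i) (r (.z i)) :=
        sum_ge _ _ fun i => by rw [hZ i]; simp [hc, cost, bribe, Jp]
      have tge2 : m * 2 ≤ ∑ j, c (.t j) (r (.t j)) :=
        sum_ge _ _ fun j => by rw [hT j]; simp [hc, cost, bribe, Jp]
      have age : 3 ≤ c .a (r .a) := by rw [ha]; simp [hc, cost, bribe, Jp]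
      omega
    have hA : bigA r := h4.resolve_right hZ
    have xpt : ∀ i, 2 + (if r (.x i) = α i then 0 else 2) ≤
        c (.x i) (r (.x i)) + c (.x' i) (r (.x' i)) := by
      intro i
      have := hA i
      revert this
      cases h : α i <;> cases r (.x i) <;> cases r (.x' i) <;> simp [hc, cost, bribe, Jp, h]
    by_cases hB : bigB r
    · obtain ⟨hψ, ha⟩ := h11 ⟨hA, hB⟩
      -- `ψ` fails here, so the encoded assignment differs from `α` somewhere, at a price of 2
      obtain ⟨i0, hi0⟩ : ∃ i, r (.x i) ≠ α i := by
        by_contra! h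
        have : (fun i => r (.x i)) = α := funext h
        rw [this, hα] at hψ
        cases hψ
      have xge2 : 2 * n + 2 ≤ ∑ i, (c (.x i) (r (.x i)) + c (.x' i) (r (.x' i))) := by
        refine le_trans ?_ (Finset.sum_le_sum fun i _ => xpt i)
        rw [Finset.sum_add_distrib]
        have := Finset.single_le_sum (f := fun i => if r (.x i) = α i then 0 else 2)
          (fun i _ => Nat.zero_le _) (Finset.mem_univ i0)
        simp only [hi0, if_false] at this
        simp only [Finset.sum_const, Finset.card_univ, Fintype.card_fin, smul_eq_mul]
        omega
      have yge : m * 3 ≤ ∑ j, (c (.y j) (r (.y j)) + c (.y' j) (r (.y' j))) :=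
        sum_ge _ _ fun j => by
          have := hB j
          revert this
          cases r (.y j) <;> cases r (.y' j) <;> simp [hc, cost, bribe, Jp]
      have age : 3 ≤ c .a (r .a) := by rw [ha]; simp [hc, cost, bribe, Jp]
      omega
    · have hT : bigT r := by
        rcases h6 with h | h
        · exact absurd h.1 hB
        · exact h.1
      have hC := h12 ⟨hA, hT⟩
      have xge2 : n * 2 ≤ ∑ i, (c (.x i) (r (.x i)) + c (.x' i) (r (.x' i))) :=
        sum_ge _ _ fun i => le_trans (Nat.le_add_right _ _) (xpt i)
      have tge2 : m * 2 ≤ ∑ j, c (.t j) (r (.t j)) :=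
        sum_ge _ _ fun j => by rw [hT j]; simp [hc, cost, bribe, Jp]
      have bge2 : (2 * m + 4) * 2 ≤ ∑ j, c (.b j) (r (.b j)) :=
        sum_ge _ _ fun j => by rw [hC j]; simp [hc, cost, bribe, Jp]
      omega
  · -- an all-true block costs at least `10n + 10m + 10` extra
    fin_cases k
    · have : (10 * n + 10 * m + 10) * 3 ≤ ∑ l, c (.u 0 l) (r (.u 0 l)) :=
        sum_ge _ _ fun l => by
          have := hk l
          simp only [Fin.zero_eta] at this
          rw [this]; simp [hc, cost, bribe, Jp]
      omega
    · have : (10 * n + 10 * m + 10) * 2 ≤ ∑ l, c (.u 1 l) (r (.u 1 l)) :=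
        sum_ge _ _ fun l => by
          have := hk l
          simp only [Fin.mk_one] at this
          rw [this]; simp [hc, cost, bribe, Jp]
      omega
    · have : (10 * n + 10 * m + 10) * 2 ≤ ∑ l, c (.u 2 l) (r (.u 2 l)) :=
        sum_ge _ _ fun l => by
          have := hk l
          simp only [Fin.reduceFinMk] at this
          rw [this]; simp [hc, cost, bribe, Jp]
      omega

/-- In a profile that differs from `J⃗` in at most one ballot, two ballots are all-false outside the
`u`-issues, so turning on such an issue has a positive price. -/
lemma cost_lt_of_bribed (J' : Fin 3 → Issue n m → Bool)
    (hJ : (Finset.univ.filter (fun k : Fin 3 => J' k ≠ Jp k)).card ≤ 1)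
    (i : Issue n m) (hi : ∀ k l, i ≠ .u k l) :
    cost (J' 0) (J' 1) (J' 2) i false + 1 ≤ cost (J' 0) (J' 1) (J' 2) i true := by
  have key : ∀ k k' : Fin 3, k ≠ k' → J' k i = false ∨ J' k' i = false := by
    intro k k' hkk
    by_contra! h
    refine hkk (Finset.card_le_one.mp hJ k ?_ k' ?_)
    · simp only [Finset.mem_filter, Finset.mem_univ, true_and]
      exact fun e => h.1 (e ▸ Jp_eq_false k hi)
    · simp only [Finset.mem_filter, Finset.mem_univ, true_and]
      exact fun e => h.2 (e ▸ Jp_eq_false k' hi)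
  have h01 := key 0 1 (by decide)
  have h02 := key 0 2 (by decide)
  have h12 := key 1 2 (by decide)
  revert h01 h02 h12
  unfold cost
  cases J' 0 i <;> cases J' 1 i <;> cases J' 2 i <;> simp

end Brib

open Brib in
/-- correctness of the brave exact bribery reduction: with m < n,
there exists α with ψ[α∪β] true for every β
iff
one can replace at most one ballot of J⃗ = (J₁, J₂, J₃) by a rational ballot, obtaining
a profile J⃗', such that some Kemeny outcome of J⃗' sets the issue b₁ to true. -/
theorem brib_exact_reduction_correct_brave (n m : ℕ) (hn : 0 < n) (hm : 0 < m)
    (hmn : m < n)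
    (psi : (Fin n → Bool) → (Fin m → Bool) → Bool) :
    (∃ α : Fin n → Bool, ∀ β : Fin m → Bool, psi α β = true) ↔
    (∃ J' : Fin 3 → Issue n m → Bool,
      (∀ k, rational psi (J' k)) ∧
      (Finset.univ.filter (fun k : Fin 3 => J' k ≠ Jp k)).card ≤ 1 ∧
      (∃ r : Issue n m → Bool, kemenyMem psi (J' 0) (J' 1) (J' 2) r ∧
        r (.b ⟨0, by omega⟩) = true)) := by
  constructor
  · rintro ⟨α, hα⟩
    refine ⟨![bribe α, Jp 1, Jp 2], ?_, ?_, bribe α,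
      ⟨bribe_rational psi hn hm α, fun r' hr' => bribe_optimal psi hmn α hα r' hr'⟩, rfl⟩
    · intro k
      fin_cases k
      · exact bribe_rational psi hn hm α
      · exact Or.inr ⟨1, fun _ => rfl⟩
      · exact Or.inr ⟨2, fun _ => rfl⟩
    · refine (Finset.card_le_card (t := {0}) fun k hk => ?_).trans (by simp)
      fin_cases k <;> simp at hk ⊢
  · rintro ⟨J', -, hJ, r, hr, hb⟩
    by_contra! h
    refine no_b_of_refuted psi (fun α => ?_) hn hm _ _ _ (cost_lt_of_bribed J' hJ) r hr _ hb
    obtain ⟨β, hβ⟩ := h α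
    exact ⟨β, by simpa using hβ⟩
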